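/- Let L(b) = (tr b)·I − bᵀ on M₃(ℝ). For w ∈ M₃(ℝ), the equation b + L(b) = w has a solution b ∈ M₃(ℝ) if and only if the symmetric traceless part w⁺ of w is zero; in that case, the set of solutions is exactly { (tr w/9)·I + ½·skew(w) + q : q a symmetric traceless 3×3 matrix }. Moreover, for every w ∈ M₃(ℝ) there is a unique symmetric traceless matrix β such that β + b + L(b) = w admits a solution b, namely β = w⁺. -/

import Mathlib

open Matrix

/-- The space of 3×3 real matrices. -/
abbrev M3 := Matrix (Fin 3) (Fin 3) ℝ

/-- The operator `L(b) = (tr b)·I − bᵀ`. -/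
noncomputable def Lmap (b : M3) : M3 := (Matrix.trace b) • (1 : M3) - bᵀ

/-- The skew-symmetric part `(w − wᵀ)/2` of a matrix. -/
noncomputable def skewPart (w : M3) : M3 := (2⁻¹ : ℝ) • (w - wᵀ)

/-- The symmetric traceless part `w⁺ = (w + wᵀ)/2 − (tr w/3)·I` of a matrix. -/
noncomputable def plusPart (w : M3) : M3 :=
  (2⁻¹ : ℝ) • (w + wᵀ) - (Matrix.trace w / 3) • (1 : M3)

theorem m3_ext_iff (a b : M3) : a = b ↔
    (a 0 0 = b 0 0 ∧ a 0 1 = b 0 1 ∧ a 0 2 = b 0 2) ∧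
    (a 1 0 = b 1 0 ∧ a 1 1 = b 1 1 ∧ a 1 2 = b 1 2) ∧
    (a 2 0 = b 2 0 ∧ a 2 1 = b 2 1 ∧ a 2 2 = b 2 2) := by
  constructor
  · rintro rfl
    simp
  · rintro ⟨⟨h1, h2, h3⟩, ⟨h4, h5, h6⟩, h7, h8, h9⟩
    ext i j
    fin_cases i <;> fin_cases j <;> assumption

theorem solvability_of_b_plus_Lb (w : M3) :
    ((∃ b : M3, b + Lmap b = w) ↔ plusPart w = 0) ∧
    (plusPart w = 0 →
      (∀ b : M3, b + Lmap b = w ↔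
        ∃ q : M3, qᵀ = q ∧ Matrix.trace q = 0 ∧
          b = (Matrix.trace w / 9) • (1 : M3) + (2⁻¹ : ℝ) • skewPart w + q)) ∧
    (∀ β : M3, (βᵀ = β ∧ Matrix.trace β = 0 ∧ ∃ b : M3, β + b + Lmap b = w) ↔
      β = plusPart w) := by
  refine ⟨⟨?_, ?_⟩, ?_, ?_⟩
  · rintro ⟨b, rfl⟩
    simp [m3_ext_iff, Lmap, plusPart, Matrix.trace_fin_three]
    refine ⟨?_, ?_, ?_⟩ <;> ring
  · intro h
    refine ⟨(Matrix.trace w / 9) • (1 : M3) + (2⁻¹ : ℝ) • skewPart w, ?_⟩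
    simp [m3_ext_iff, Lmap, plusPart, skewPart, Matrix.trace_fin_three, Matrix.one_apply] at h ⊢
    obtain ⟨⟨h1, h2, h3⟩, ⟨h4, h5, h6⟩, h7, h8, h9⟩ := h
    refine ⟨⟨?_, ?_, ?_⟩, ⟨?_, ?_, ?_⟩, ?_, ?_, ?_⟩ <;> linarith
  · intro h b
    constructor
    · intro hb
      refine ⟨b - ((Matrix.trace w / 9) • (1 : M3) + (2⁻¹ : ℝ) • skewPart w), ?_, ?_, by abel⟩
      · subst hb
        simp [m3_ext_iff, Lmap, plusPart, skewPart, Matrix.trace_fin_three, Matrix.one_apply]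
        refine ⟨⟨?_, ?_⟩, ⟨?_, ?_⟩, ?_, ?_⟩ <;> ring
      · subst hb
        simp [m3_ext_iff, Lmap, plusPart, skewPart, Matrix.trace_fin_three, Matrix.one_apply]
        ring
    · rintro ⟨q, hq, ht, rfl⟩
      simp [m3_ext_iff, Lmap, plusPart, skewPart, Matrix.trace_fin_three, Matrix.one_apply] at h hq ht ⊢
      obtain ⟨⟨h1, h2, h3⟩, ⟨h4, h5, h6⟩, h7, h8, h9⟩ := h
      refine ⟨⟨?_, ?_, ?_⟩, ⟨?_, ?_, ?_⟩, ?_, ?_, ?_⟩ <;> linarith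
  · intro β
    constructor
    · rintro ⟨hq, ht, b, rfl⟩
      simp [m3_ext_iff, Lmap, plusPart, skewPart, Matrix.trace_fin_three, Matrix.one_apply] at hq ht ⊢
      refine ⟨⟨?_, ?_, ?_⟩, ⟨?_, ?_, ?_⟩, ?_, ?_, ?_⟩ <;> linarith
    · rintro rfl
      refine ⟨?_, ?_, (Matrix.trace w / 9) • (1 : M3) + (2⁻¹ : ℝ) • skewPart w, ?_⟩
      · simp [m3_ext_iff, Lmap, plusPart, skewPart, Matrix.trace_fin_three, Matrix.one_apply]
        refine ⟨⟨?_, ?_⟩, ⟨?_, ?_⟩, ?_, ?_⟩ <;> ring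
      · simp [m3_ext_iff, Lmap, plusPart, skewPart, Matrix.trace_fin_three, Matrix.one_apply]
        ring
      · simp [m3_ext_iff, Lmap, plusPart, skewPart, Matrix.trace_fin_three, Matrix.one_apply]
        refine ⟨⟨?_, ?_, ?_⟩, ⟨?_, ?_, ?_⟩, ?_, ?_, ?_⟩ <;> ring
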